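/- Let d ≥ 1, λ ≥ 0, K ≥ 0, and let φ : ℝ^d → ℝ be K-Lipschitz and λ-concave. For ε > 0 let u^ε_t be the Cole–Hopf function. Suppose X, Z : [0,∞) → ℝ^d are differentiable curves such that for every t > 0 the function u^ε_t is differentiable at X(t) and at Z(t) with X'(t) = ∇u^ε_t(X(t)) and Z'(t) = ∇u^ε_t(Z(t)). Then for all 0 ≤ s ≤ t: ‖X(t) − Z(t)‖/(1+λt) ≤ ‖X(s) − Z(s)‖/(1+λs); in particular ‖X(t) − Z(t)‖/(1+λt) ≤ ‖X(0) − Z(0)‖. -/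

import Mathlib

open MeasureTheory
noncomputable section

/-- The Cole–Hopf function. -/
def coleHopf {d : ℕ} (φ : EuclideanSpace ℝ (Fin d) → ℝ) (ε t : ℝ)
    (x : EuclideanSpace ℝ (Fin d)) : ℝ :=
  -ε * Real.log ((2 * Real.pi * ε * t) ^ (-(d : ℝ) / 2) *
    ∫ y : EuclideanSpace ℝ (Fin d),
      Real.exp (-‖x - y‖ ^ 2 / (2 * ε * t) - φ y / ε))

/-!
For fixed `t`, put `m = 1 + lam * t` and substitute `y = z + m⁻¹ • x` in the Cole–Hopf integral.
Completing the square turns the exponent, up to the term `-(lam / m / 2) * ‖x‖ ^ 2 / ε`, into a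
function of `x` and `z` that is convex in `x`, because `φ - lam / 2 * ‖·‖ ^ 2` is concave. The
logarithm of an integral of log-convex functions is convex (Hölder), so the Cole–Hopf function is
`lam / m`-concave. Its gradient therefore has one-sided Lipschitz constant `lam / m`, which is the
logarithmic derivative of `m`, and a Grönwall argument makes `‖X - Z‖ / m` nonincreasing.
-/

open Set

section LogIntegral

variable {E Ω : Type*} [AddCommGroup E] [Module ℝ E] [MeasurableSpace Ω] {μ : Measure Ω}

theorem log_integral_exp_le_of_le_add [NeZero μ] {f g h : Ω → ℝ} {a b : ℝ}
    (ha : 0 ≤ a) (hb : 0 ≤ b) (hab : a + b = 1)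
    (hf : Integrable (fun ω => Real.exp (f ω)) μ) (hg : Integrable (fun ω => Real.exp (g ω)) μ)
    (hh : Integrable (fun ω => Real.exp (h ω)) μ) (hle : ∀ᵐ ω ∂μ, h ω ≤ a * f ω + b * g ω) :
    Real.log (∫ ω, Real.exp (h ω) ∂μ) ≤
      a * Real.log (∫ ω, Real.exp (f ω) ∂μ) + b * Real.log (∫ ω, Real.exp (g ω) ∂μ) := by
  set F := ∫ ω, Real.exp (f ω) ∂μ
  set G := ∫ ω, Real.exp (g ω) ∂μ
  have hF : 0 < F := integral_exp_pos hf
  have hG : 0 < G := integral_exp_pos hg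
  set N := a * Real.log F + b * Real.log G
  have pointwise : ∀ᵐ ω ∂μ, Real.exp (h ω) ≤
      Real.exp N * (a * (Real.exp (f ω) / F) + b * (Real.exp (g ω) / G)) := by
    filter_upwards [hle] with ω hω
    calc Real.exp (h ω)
        ≤ Real.exp (N + (a * (f ω - Real.log F) + b * (g ω - Real.log G))) := by
          gcongr
          linarith
      _ = Real.exp N * Real.exp (a * (f ω - Real.log F) + b * (g ω - Real.log G)) :=
          Real.exp_add _ _
      _ ≤ Real.exp N * (a * Real.exp (f ω - Real.log F) + b * Real.exp (g ω - Real.log G)) := by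
          gcongr
          exact convexOn_exp.2 (mem_univ _) (mem_univ _) ha hb hab
      _ = Real.exp N * (a * (Real.exp (f ω) / F) + b * (Real.exp (g ω) / G)) := by
          rw [Real.exp_sub, Real.exp_sub, Real.exp_log hF, Real.exp_log hG]
  have hf' := (hf.div_const F).const_mul a
  have hg' := (hg.div_const G).const_mul b
  rw [Real.log_le_iff_le_exp (integral_exp_pos hh)]
  calc ∫ ω, Real.exp (h ω) ∂μ
      ≤ ∫ ω, Real.exp N * (a * (Real.exp (f ω) / F) + b * (Real.exp (g ω) / G)) ∂μ :=
        integral_mono_ae hh ((hf'.add hg').const_mul _) pointwise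
    _ = Real.exp N * (a * (F / F) + b * (G / G)) := by
        rw [integral_const_mul, integral_add hf' hg', integral_const_mul, integral_const_mul,
          integral_div, integral_div]
    _ = Real.exp N := by
        rw [div_self hF.ne', div_self hG.ne', mul_one, mul_one, hab, mul_one]

theorem convexOn_log_integral_exp [NeZero μ] {s : Set E} {f : E → Ω → ℝ}
    (hf : ∀ᵐ ω ∂μ, ConvexOn ℝ s (fun x => f x ω))
    (hint : ∀ x ∈ s, Integrable (fun ω => Real.exp (f x ω)) μ) :
    ConvexOn ℝ s (fun x => Real.log (∫ ω, Real.exp (f x ω) ∂μ)) := by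
  obtain ⟨_, hs, -⟩ := hf.exists
  refine ⟨hs, fun x hx y hy a b ha hb hab => ?_⟩
  refine log_integral_exp_le_of_le_add ha hb hab (hint x hx) (hint y hy)
    (hint _ (hs hx hy ha hb hab)) ?_
  filter_upwards [hf] with ω hω using hω.2 hx hy ha hb hab

end LogIntegral

section Gaussian

variable {E : Type*} [NormedAddCommGroup E] [InnerProductSpace ℝ E] [FiniteDimensional ℝ E]
  [MeasurableSpace E] [BorelSpace E]

theorem integrable_exp_neg_mul_norm_sq {b : ℝ} (hb : 0 < b) :
    Integrable (fun v : E => Real.exp (-b * ‖v‖ ^ 2)) := by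
  refine .of_integral_ne_zero ?_
  rw [GaussianFourier.integral_rexp_neg_mul_sq_norm hb]
  positivity

theorem integrable_exp_neg_mul_norm_sq_add_mul_norm {b : ℝ} (hb : 0 < b) (c : ℝ) :
    Integrable (fun v : E => Real.exp (-b * ‖v‖ ^ 2 + c * ‖v‖)) := by
  refine ((integrable_exp_neg_mul_norm_sq (half_pos hb)).const_mul
    (Real.exp (c ^ 2 / (2 * b)))).mono' (by fun_prop) (.of_forall fun v => ?_)
  rw [Real.norm_of_nonneg (Real.exp_pos _).le, ← Real.exp_add, Real.exp_le_exp]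
  have square : c ^ 2 / (2 * b) + -(b / 2) * ‖v‖ ^ 2 - (-b * ‖v‖ ^ 2 + c * ‖v‖) =
      (b * ‖v‖ - c) ^ 2 / (2 * b) := by
    field_simp
    ring
  have : 0 ≤ (b * ‖v‖ - c) ^ 2 / (2 * b) := by positivity
  linarith

end Gaussian

section Exponent

variable {E : Type*} [NormedAddCommGroup E]

/-- The exponent of the Cole–Hopf integrand, so that `coleHopf φ ε t x` is `-ε` times the logarithm
of the normalized integral of `exp (coleHopfExponent φ ε t x y)` over `y`. -/
def coleHopfExponent (φ : E → ℝ) (ε t : ℝ) (x y : E) : ℝ :=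
  -‖x - y‖ ^ 2 / (2 * ε * t) - φ y / ε

variable [InnerProductSpace ℝ E] {φ : E → ℝ} {lam ε t : ℝ}

theorem integrable_exp_coleHopfExponent [FiniteDimensional ℝ E] [MeasurableSpace E] [BorelSpace E]
    {K : NNReal} (hφ : LipschitzWith K φ) (hε : 0 < ε) (ht : 0 < t) (x : E) :
    Integrable (fun y => Real.exp (coleHopfExponent φ ε t x y)) := by
  have hb : 0 < 1 / (2 * ε * t) := by positivity
  have hcont := hφ.continuous
  refine (((integrable_exp_neg_mul_norm_sq_add_mul_norm hb (K / ε)).comp_sub_left x).const_mul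
    (Real.exp (-φ x / ε))).mono' (by unfold coleHopfExponent; fun_prop) (.of_forall fun y => ?_)
  rw [Real.norm_of_nonneg (Real.exp_pos _).le, ← Real.exp_add, Real.exp_le_exp]
  have lower_bound : -φ y / ε ≤ (-φ x + K * ‖x - y‖) / ε := by
    gcongr
    have := (le_abs_self _).trans (hφ.dist_le_mul x y)
    rw [dist_eq_norm] at this
    linarith
  calc coleHopfExponent φ ε t x y = -‖x - y‖ ^ 2 / (2 * ε * t) + -φ y / ε := by
        rw [coleHopfExponent]
        ring
    _ ≤ -‖x - y‖ ^ 2 / (2 * ε * t) + (-φ x + K * ‖x - y‖) / ε := by gcongr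
    _ = -φ x / ε + (-(1 / (2 * ε * t)) * ‖x - y‖ ^ 2 + K / ε * ‖x - y‖) := by ring

theorem norm_sub_add_inv_smul_sq_div_add (ht : t ≠ 0) (hm : 1 + lam * t ≠ 0) (x z : E) :
    ‖x - (z + (1 + lam * t)⁻¹ • x)‖ ^ 2 / (2 * t) + lam / 2 * ‖z + (1 + lam * t)⁻¹ • x‖ ^ 2 =
      (1 + lam * t) / (2 * t) * ‖z‖ ^ 2 + lam / (1 + lam * t) / 2 * ‖x‖ ^ 2 := by
  have : x - (z + (1 + lam * t)⁻¹ • x) = (1 - (1 + lam * t)⁻¹) • x - z := by module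
  rw [this, norm_sub_sq_real, norm_add_sq_real, norm_smul, norm_smul, real_inner_smul_left,
    real_inner_smul_right, mul_pow, mul_pow, Real.norm_eq_abs, Real.norm_eq_abs, sq_abs, sq_abs,
    real_inner_comm z x]
  field_simp
  ring

theorem convexOn_coleHopfExponent_shift_add (hε : 0 < ε) (ht : t ≠ 0) (hm : 1 + lam * t ≠ 0)
    (hφ : ConcaveOn ℝ univ (fun y => φ y - lam / 2 * ‖y‖ ^ 2)) (z : E) :
    ConvexOn ℝ univ (fun x => coleHopfExponent φ ε t x (z + (1 + lam * t)⁻¹ • x) +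
      lam / (1 + lam * t) / 2 * ‖x‖ ^ 2 / ε) := by
  let shift : E →ᵃ[ℝ] E :=
    AffineMap.const ℝ E z + ((1 + lam * t)⁻¹ • LinearMap.id : E →ₗ[ℝ] E).toAffineMap
  refine (((hφ.comp_affineMap shift).neg.smul (inv_nonneg.2 hε.le)).add_const
    (-((1 + lam * t) / (2 * t) * ‖z‖ ^ 2 / ε))).congr fun x _ => ?_
  change ε⁻¹ * -(φ (z + (1 + lam * t)⁻¹ • x) - lam / 2 * ‖z + (1 + lam * t)⁻¹ • x‖ ^ 2) +
    -((1 + lam * t) / (2 * t) * ‖z‖ ^ 2 / ε) = _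
  rw [coleHopfExponent]
  linear_combination norm_sub_add_inv_smul_sq_div_add ht hm x z / ε

end Exponent

section ColeHopf

variable {d : ℕ} {φ : EuclideanSpace ℝ (Fin d) → ℝ} {lam ε t : ℝ}

theorem coleHopf_sub_mul_eq_log_integral (hε : 0 < ε) (ht : 0 < t)
    (x : EuclideanSpace ℝ (Fin d))
    (hint : Integrable (fun y => Real.exp (coleHopfExponent φ ε t x y)))
    (v : EuclideanSpace ℝ (Fin d)) (c : ℝ) :
    coleHopf φ ε t x - c =
      -ε * Real.log (∫ z, Real.exp (coleHopfExponent φ ε t x (z + v) + c / ε)) +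
        -ε * Real.log ((2 * Real.pi * ε * t) ^ (-(d : ℝ) / 2)) := by
  have hC : 0 < (2 * Real.pi * ε * t) ^ (-(d : ℝ) / 2) := by positivity
  have translate : ∫ z, Real.exp (coleHopfExponent φ ε t x (z + v) + c / ε) =
      (∫ y, Real.exp (coleHopfExponent φ ε t x y)) * Real.exp (c / ε) := by
    simp only [Real.exp_add]
    rw [integral_mul_const,
      integral_add_right_eq_self (fun y => Real.exp (coleHopfExponent φ ε t x y))]
  have unfolded : coleHopf φ ε t x = -ε * Real.log ((2 * Real.pi * ε * t) ^ (-(d : ℝ) / 2) *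
      ∫ y, Real.exp (coleHopfExponent φ ε t x y)) := rfl
  have hI := integral_exp_pos hint
  rw [translate, unfolded, Real.log_mul hC.ne' hI.ne', Real.log_mul hI.ne' (Real.exp_ne_zero _),
    Real.log_exp]
  field_simp
  ring

theorem concaveOn_coleHopf_sub (hε : 0 < ε) (ht : 0 < t) (hm : 1 + lam * t ≠ 0)
    (hφ : ConcaveOn ℝ univ (fun y => φ y - lam / 2 * ‖y‖ ^ 2))
    (hint : ∀ x, Integrable (fun y => Real.exp (coleHopfExponent φ ε t x y))) :
    ConcaveOn ℝ univ (fun x => coleHopf φ ε t x - lam / (1 + lam * t) / 2 * ‖x‖ ^ 2) := by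
  have hlog := convexOn_log_integral_exp (μ := volume)
    (.of_forall fun z => convexOn_coleHopfExponent_shift_add hε ht.ne' hm hφ z) fun x _ => by
      simpa only [Real.exp_add] using ((hint x).comp_add_right ((1 + lam * t)⁻¹ • x)).mul_const _
  refine ((hlog.smul hε.le).neg.add_const
    (-ε * Real.log ((2 * Real.pi * ε * t) ^ (-(d : ℝ) / 2)))).congr fun x _ => ?_
  rw [coleHopf_sub_mul_eq_log_integral hε ht x (hint x) ((1 + lam * t)⁻¹ • x)]
  simp only [Pi.add_apply, Pi.neg_apply, smul_eq_mul, neg_mul]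

end ColeHopf

section Gradient

theorem fderiv_apply_sub_le_of_concaveOn {E : Type*} [NormedAddCommGroup E] [NormedSpace ℝ E]
    {s : Set E} {f : E → ℝ} {f'x f'y : E →L[ℝ] ℝ} {x y : E} (hf : ConcaveOn ℝ s f)
    (hx : x ∈ s) (hy : y ∈ s) (hfx : HasFDerivAt f f'x x) (hfy : HasFDerivAt f f'y y) :
    f'x (x - y) ≤ f'y (x - y) := by
  have hline := hf.comp_affineMap (AffineMap.lineMap y x : ℝ →ᵃ[ℝ] E)
  have hy' : HasDerivAt (f ∘ AffineMap.lineMap y x) (f'y (x - y)) (0 : ℝ) :=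
    HasFDerivAt.comp_hasDerivAt 0 (by simpa using hfy) AffineMap.hasDerivAt_lineMap
  have hx' : HasDerivAt (f ∘ AffineMap.lineMap y x) (f'x (x - y)) (1 : ℝ) :=
    HasFDerivAt.comp_hasDerivAt 1 (by simpa using hfx) AffineMap.hasDerivAt_lineMap
  have h0 : (0 : ℝ) ∈ AffineMap.lineMap y x ⁻¹' s := by simpa using hy
  have h1 : (1 : ℝ) ∈ AffineMap.lineMap y x ⁻¹' s := by simpa using hx
  exact (hline.le_slope_of_hasDerivAt h0 h1 one_pos hx').trans
    (hline.slope_le_of_hasDerivAt h0 h1 one_pos hy')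

theorem inner_sub_gradient_sub_le_of_concaveOn_sub {E : Type*} [NormedAddCommGroup E]
    [InnerProductSpace ℝ E] [CompleteSpace E] {s : Set E} {u : E → ℝ} {c : ℝ} {x y : E}
    (hu : ConcaveOn ℝ s (fun x => u x - c / 2 * ‖x‖ ^ 2)) (hx : x ∈ s) (hy : y ∈ s)
    (hux : DifferentiableAt ℝ u x) (huy : DifferentiableAt ℝ u y) :
    inner ℝ (x - y) (gradient u x - gradient u y) ≤ c * ‖x - y‖ ^ 2 := by
  have hderiv : ∀ w, DifferentiableAt ℝ u w → HasFDerivAt (fun x => u x - c / 2 * ‖x‖ ^ 2)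
      (InnerProductSpace.toDual ℝ E (gradient u w) - (c / 2) • 2 • innerSL ℝ w) w := fun w hw =>
    hw.hasGradientAt.hasFDerivAt.sub ((hasStrictFDerivAt_norm_sq w).hasFDerivAt.const_mul (c / 2))
  have h := fderiv_apply_sub_le_of_concaveOn hu hx hy (hderiv x hux) (hderiv y huy)
  simp only [sub_apply, smul_apply,
    InnerProductSpace.toDual_apply_apply, innerSL_apply_apply, smul_eq_mul, nsmul_eq_mul] at h
  rw [real_inner_comm, inner_sub_left, ← real_inner_self_eq_norm_sq, inner_sub_left x y]
  push_cast at h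
  linarith

end Gradient

theorem antitoneOn_norm_div {E : Type*} [NormedAddCommGroup E] [InnerProductSpace ℝ E]
    {D : Set ℝ} {γ γ' : ℝ → E} {m m' : ℝ → ℝ} (hD : Convex ℝ D)
    (hγ : ContinuousOn γ D) (hm : ContinuousOn m D) (hpos : ∀ t ∈ D, 0 < m t)
    (hγ' : ∀ t ∈ interior D, HasDerivAt γ (γ' t) t)
    (hm' : ∀ t ∈ interior D, HasDerivAt m (m' t) t)
    (hle : ∀ t ∈ interior D, m t * inner ℝ (γ t) (γ' t) ≤ m' t * ‖γ t‖ ^ 2) :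
    AntitoneOn (fun t => ‖γ t‖ / m t) D := by
  have hderiv : ∀ t ∈ interior D, HasDerivAt (fun t => ‖γ t‖ ^ 2 / m t ^ 2)
      (2 * m t * (m t * inner ℝ (γ t) (γ' t) - m' t * ‖γ t‖ ^ 2) / (m t ^ 2) ^ 2) t := by
    intro t ht
    have hmt : m t ^ 2 ≠ 0 := (pow_pos (hpos t (interior_subset ht)) 2).ne'
    refine ((hγ' t ht).norm_sq.fun_div ((hm' t ht).fun_pow 2) hmt).congr_deriv ?_
    push_cast
    ring
  have sq_antitone : AntitoneOn (fun t => ‖γ t‖ ^ 2 / m t ^ 2) D := by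
    refine antitoneOn_of_deriv_nonpos hD
      ((hγ.norm.pow 2).div (hm.pow 2) fun t ht => (pow_pos (hpos t ht) 2).ne')
      (fun t ht => (hderiv t ht).differentiableAt.differentiableWithinAt) fun t ht => ?_
    rw [(hderiv t ht).deriv]
    have hmt := hpos t (interior_subset ht)
    exact div_nonpos_of_nonpos_of_nonneg
      (mul_nonpos_of_nonneg_of_nonpos (by positivity) (sub_nonpos.2 (hle t ht))) (by positivity)
  intro s hs t ht hst
  have hsq := sq_antitone hs ht hst
  simp only [← div_pow] at hsq
  exact le_of_sq_le_sq hsq (div_nonneg (norm_nonneg _) (hpos s hs).le)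

theorem stmt4_general {d : ℕ} {lam ε : ℝ} {φ : EuclideanSpace ℝ (Fin d) → ℝ} {I : Set ℝ}
    {X Z : ℝ → EuclideanSpace ℝ (Fin d)} (hI : Convex ℝ I) (hI_nonneg : I ⊆ Ici 0)
    (hpos : ∀ t ∈ I, 0 < 1 + lam * t) (hε : 0 < ε)
    (hConc : ConcaveOn ℝ univ (fun y => φ y - lam / 2 * ‖y‖ ^ 2))
    (hint : ∀ t ∈ interior I, ∀ x, Integrable (fun y => Real.exp (coleHopfExponent φ ε t x y)))
    (hXcont : ContinuousOn X I) (hZcont : ContinuousOn Z I)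
    (hX : ∀ t ∈ interior I, DifferentiableAt ℝ (coleHopf φ ε t) (X t) ∧
      HasDerivAt X (gradient (coleHopf φ ε t) (X t)) t)
    (hZ : ∀ t ∈ interior I, DifferentiableAt ℝ (coleHopf φ ε t) (Z t) ∧
      HasDerivAt Z (gradient (coleHopf φ ε t) (Z t)) t) :
    AntitoneOn (fun t => ‖X t - Z t‖ / (1 + lam * t)) I := by
  refine antitoneOn_norm_div hI (hXcont.sub hZcont) (by fun_prop) hpos
    (fun t ht => (hX t ht).2.sub (hZ t ht).2)
    (fun t _ => by simpa using ((hasDerivAt_id t).const_mul lam).const_add 1) fun t ht => ?_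
  have ht_pos : 0 < t := interior_Ici.subset (interior_mono hI_nonneg ht)
  have hm := hpos t (interior_subset ht)
  have hmono := inner_sub_gradient_sub_le_of_concaveOn_sub
    (concaveOn_coleHopf_sub hε ht_pos hm.ne' hConc (hint t ht)) (mem_univ _) (mem_univ _)
    (hX t ht).1 (hZ t ht).1
  rwa [div_mul_eq_mul_div, le_div_iff₀' hm] at hmono

theorem stmt4 (d : ℕ) (hd : 1 ≤ d) (lam K : ℝ) (hlam : 0 ≤ lam) (hK : 0 ≤ K)
    (φ : EuclideanSpace ℝ (Fin d) → ℝ)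
    (hLip : ∀ y z, |φ y - φ z| ≤ K * ‖y - z‖)
    (hConc : ConcaveOn ℝ Set.univ (fun y => φ y - lam / 2 * ‖y‖ ^ 2))
    (ε : ℝ) (hε : 0 < ε)
    (X Z : ℝ → EuclideanSpace ℝ (Fin d))
    (hXdiff : DifferentiableOn ℝ X (Set.Ici (0 : ℝ)))
    (hZdiff : DifferentiableOn ℝ Z (Set.Ici (0 : ℝ)))
    (hX : ∀ t : ℝ, 0 < t → DifferentiableAt ℝ (coleHopf φ ε t) (X t) ∧
      HasDerivAt X (gradient (coleHopf φ ε t) (X t)) t)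
    (hZ : ∀ t : ℝ, 0 < t → DifferentiableAt ℝ (coleHopf φ ε t) (Z t) ∧
      HasDerivAt Z (gradient (coleHopf φ ε t) (Z t)) t) :
    ∀ s t : ℝ, 0 ≤ s → s ≤ t →
      ‖X t - Z t‖ / (1 + lam * t) ≤ ‖X s - Z s‖ / (1 + lam * s) ∧
      ‖X t - Z t‖ / (1 + lam * t) ≤ ‖X 0 - Z 0‖ := by
  have hpos : ∀ t ∈ Ici (0 : ℝ), 0 < 1 + lam * t := fun t (ht : 0 ≤ t) => by positivity
  have hφ : LipschitzWith ⟨K, hK⟩ φ := .of_dist_le_mul fun y z => by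
    simpa only [dist_eq_norm] using! hLip y z
  have hanti := stmt4_general (convex_Ici 0) subset_rfl hpos hε hConc
    (fun t ht => integrable_exp_coleHopfExponent hφ hε (interior_Ici.subset ht))
    hXdiff.continuousOn hZdiff.continuousOn
    (fun t ht => hX t (interior_Ici.subset ht)) (fun t ht => hZ t (interior_Ici.subset ht))
  intro s t hs hst
  exact ⟨hanti hs (hs.trans hst) hst,
    by simpa using hanti self_mem_Ici (hs.trans hst) (hs.trans hst)⟩
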